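/- For every odd integer n ≥ 3, the complete graph K_n and the cycle graph C_n are locally equienergetic, i.e., e(K_n) = e(C_n). -/

import Mathlib

open SimpleGraph Matrix Finset

noncomputable section

/-- The adjacency matrix of a simple graph over `ℝ` is Hermitian. -/
lemma adjMatrix_isHermitian {V : Type*} [Fintype V] (G : SimpleGraph V)
    [DecidableRel G.Adj] : (G.adjMatrix ℝ).IsHermitian := by
  rw [Matrix.IsHermitian, Matrix.conjTranspose_eq_transpose_of_trivial]
  exact G.isSymm_adjMatrix

/-- The energy of a finite simple graph: the sum of the absolute values of the
eigenvalues of its adjacency matrix. -/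
def graphEnergy {V : Type*} [Fintype V] [DecidableEq V] (G : SimpleGraph V) : ℝ :=
  letI := Classical.decRel G.Adj
  ∑ i, |(adjMatrix_isHermitian G).eigenvalues i|

/-- The local energy of `G` at a vertex `v`: the energy of `G` minus the energy of the
induced subgraph obtained by deleting `v`. -/
def localEnergyAt {V : Type*} [Fintype V] [DecidableEq V] (G : SimpleGraph V) (v : V) : ℝ :=
  graphEnergy G - graphEnergy (G.induce {u | u ≠ v})

/-- The local energy of `G`: the sum of the local energies at all vertices. -/
def localEnergy {V : Type*} [Fintype V] [DecidableEq V] (G : SimpleGraph V) : ℝ :=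
  ∑ v, localEnergyAt G v

end

/-!
Every vertex of either graph has local energy `2`. For `K_n` this is read off from its spectrum:
`n - 1` once and `-1` with multiplicity `n - 1`.

Deleting a vertex of `C_n` leaves the path `P_{n-1}`, whose eigenvalues are `2 cos (kπ/n)` for
`0 < k < n`, with sine eigenvectors. The eigenvalues of `C_n` are `z + z⁻¹` for the `n`-th roots of
unity `z`, with eigenvectors `i ↦ zⁱ`. For odd `n` the number `-exp (iπ/n)` is a primitive `n`-th
root of unity, so these eigenvalues are `(-1)ᵏ 2 cos (kπ/n)` for `0 ≤ k < n`. Up to sign they are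
the eigenvalues of `P_{n-1}` together with the eigenvalue `2` at `k = 0`.
-/

section Spectrum

open Polynomial

variable {V : Type*} [Fintype V] [DecidableEq V]

lemma graphEnergy_eq_sum_norm_roots_charpoly (𝕜 : Type*) [RCLike 𝕜] (G : SimpleGraph V)
    [DecidableRel G.Adj] :
    graphEnergy G = ((G.adjMatrix 𝕜).charpoly.roots.map (‖·‖)).sum := by
  have hA := adjMatrix_isHermitian G
  have hmap : G.adjMatrix 𝕜 = (G.adjMatrix ℝ).map (algebraMap ℝ 𝕜) := by
    ext u v
    simp [adjMatrix_apply, apply_ite]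
  have hroots : (G.adjMatrix 𝕜).charpoly.roots =
      univ.val.map fun v ↦ algebraMap ℝ 𝕜 (hA.eigenvalues v) := by
    rw [hmap, charpoly_map, hA.splits_charpoly.roots_map, hA.roots_charpoly_eq_eigenvalues]
    simp
  have henergy : graphEnergy G = ∑ v, |hA.eigenvalues v| := by
    unfold graphEnergy
    congr!
  simp [henergy, hroots]

lemma graphEnergy_congr {W : Type*} [Fintype W] [DecidableEq W] {G : SimpleGraph V}
    {H : SimpleGraph W} (e : G ≃g H) : graphEnergy G = graphEnergy H := by
  classical
  rw [graphEnergy_eq_sum_norm_roots_charpoly ℝ, graphEnergy_eq_sum_norm_roots_charpoly ℝ,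
    ← e.reindex_adjMatrix ℝ, charpoly_reindex]

lemma charpoly_eq_prod_of_eigenbasis {ι R M : Type*} [Fintype ι] [CommRing R] [AddCommGroup M]
    [Module R M] [Module.Free R M] [Module.Finite R M] (f : Module.End R M)
    (b : Module.Basis ι R M) {μ : ι → R} (hb : ∀ i, f (b i) = μ i • b i) :
    f.charpoly = ∏ i, (X - C (μ i)) := by
  classical
  have hdiag : LinearMap.toMatrix b b f = diagonal μ := by
    ext i j
    rcases eq_or_ne i j with rfl | hij <;> simp [LinearMap.toMatrix_apply, *]
  rw [← f.charpoly_toMatrix b, hdiag, charpoly_diagonal]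

lemma graphEnergy_eq_sum_norm_of_linearIndependent_eigenvectors {𝕜 : Type*} [RCLike 𝕜]
    (G : SimpleGraph V) [DecidableRel G.Adj] {x : V → V → 𝕜} (hx : LinearIndependent 𝕜 x)
    {μ : V → 𝕜} (hμ : ∀ v, G.adjMatrix 𝕜 *ᵥ x v = μ v • x v) :
    graphEnergy G = ∑ v, ‖μ v‖ := by
  cases isEmpty_or_nonempty V
  · simp [graphEnergy]
  let b := basisOfLinearIndependentOfCardEqFinrank hx (by simp)
  have hb : ∀ v, toLin' (G.adjMatrix 𝕜) (b v) = μ v • b v := by simpa [b] using hμ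
  rw [graphEnergy_eq_sum_norm_roots_charpoly 𝕜, ← charpoly_toLin',
    charpoly_eq_prod_of_eigenbasis _ b hb,
    roots_prod _ _ (prod_ne_zero_iff.mpr fun v _ ↦ X_sub_C_ne_zero (μ v))]
  simp

end Spectrum

section Complete

open Polynomial

lemma charpoly_adjMatrix_top (V R : Type*) [Fintype V] [DecidableEq V] [Nonempty V] [CommRing R] :
    ((⊤ : SimpleGraph V).adjMatrix R).charpoly =
      (X + 1) ^ (Fintype.card V - 1) * (X - C ((Fintype.card V : R) - 1)) := by
  have hsub : (⊤ : SimpleGraph V).adjMatrix R = vecMulVec 1 1 - scalar V 1 := by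
    ext u v
    rcases eq_or_ne u v with rfl | huv <;> simp [*]
  have hcard : Fintype.card V - 1 + 1 = Fintype.card V := Nat.sub_add_cancel Fintype.card_pos
  rw [hsub, charpoly_sub_scalar, charpoly_vecMulVec]
  nth_rw 1 [← hcard]
  simp only [one_dotProduct_one, smul_eq_C_mul, map_natCast, map_one, map_sub, sub_comp, mul_comp,
    pow_comp, X_comp, natCast_comp]
  ring

lemma graphEnergy_top (V : Type*) [Fintype V] [DecidableEq V] [Nonempty V] :
    graphEnergy (⊤ : SimpleGraph V) = 2 * (Fintype.card V - 1) := by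
  have hcard : 1 ≤ Fintype.card V := Fintype.card_pos
  have hroots : ((⊤ : SimpleGraph V).adjMatrix ℝ).charpoly.roots =
      Multiset.replicate (Fintype.card V - 1) (-1) + {(Fintype.card V : ℝ) - 1} := by
    have hX : (X + 1 : ℝ[X]) = X - C (-1) := by simp
    rw [charpoly_adjMatrix_top, hX,
      roots_mul (mul_ne_zero (pow_ne_zero _ (X_sub_C_ne_zero _)) (X_sub_C_ne_zero _)), roots_pow,
      roots_X_sub_C, roots_X_sub_C, Multiset.nsmul_singleton]
  have hnonneg : (0 : ℝ) ≤ Fintype.card V - 1 := by simpa using hcard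
  rw [graphEnergy_eq_sum_norm_roots_charpoly ℝ, hroots]
  simp only [Multiset.map_add, Multiset.map_replicate, Multiset.map_singleton, Multiset.sum_add,
    Multiset.sum_replicate, Multiset.sum_singleton, nsmul_eq_mul, norm_neg, norm_one,
    Real.norm_of_nonneg hnonneg, Nat.cast_sub hcard, Nat.cast_one]
  ring

lemma localEnergyAt_top {V : Type*} [Fintype V] [DecidableEq V] [Nontrivial V] (v : V) :
    localEnergyAt (⊤ : SimpleGraph V) v = 2 := by
  obtain ⟨w, hw⟩ := exists_ne v
  have : Nonempty {u | u ≠ v} := ⟨w, hw⟩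
  have hcard : (Fintype.card {u | u ≠ v} : ℝ) = Fintype.card V - 1 := by
    rw [← Nat.cast_pred Fintype.card_pos, Nat.cast_inj]
    exact Set.card_ne_eq v
  have htop : (⊤ : SimpleGraph V).induce {u | u ≠ v} = ⊤ := by simp
  rw [localEnergyAt, htop, graphEnergy_top, graphEnergy_top, hcard]
  ring

end Complete

section Path

variable {n : ℕ}

/- The values of `f` at `0` and `n + 1` belong to phantom neighbours of the two ends of the path. -/
lemma adjMatrix_pathGraph_mulVec {R : Type*} [NonAssocSemiring R]
    [DecidableRel (pathGraph n).Adj] {f : ℕ → R} (hzero : f 0 = 0) (hlast : f (n + 1) = 0)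
    (i : Fin n) :
    ((pathGraph n).adjMatrix R *ᵥ fun j ↦ f (j + 1)) i = f i + f (i + 2) := by
  let g : ℕ → R := fun k ↦ if k ∈ ({i.val, i.val + 2} : Finset ℕ) then f k else 0
  have hg_zero : g 0 = 0 := by simp [g, hzero]
  have hg_last : g (n + 1) = 0 := by simp [g, hlast]
  calc ((pathGraph n).adjMatrix R *ᵥ fun j ↦ f (j + 1)) i
      = ∑ j : Fin n, g (j + 1) := by
        simp only [mulVec, dotProduct, adjMatrix_apply, pathGraph_adj, ite_mul, one_mul, zero_mul]
        refine sum_congr rfl fun j _ ↦ if_congr ?_ rfl rfl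
        simp only [Finset.mem_insert, Finset.mem_singleton]
        omega
    _ = ∑ k ∈ range (n + 2), g k := by
        rw [sum_range_succ, sum_range_succ', hg_zero, hg_last, add_zero, add_zero,
          Fin.sum_univ_eq_sum_range (fun k ↦ g (k + 1))]
    _ = ∑ k ∈ {i.val, i.val + 2}, f k := by
        simp only [g]
        rw [sum_ite_mem, inter_eq_right.mpr]
        simp only [insert_subset_iff, singleton_subset_iff, mem_range]
        omega
    _ = f i + f (i + 2) := sum_pair (by simp)

lemma adjMatrix_pathGraph_mulVec_sin [DecidableRel (pathGraph n).Adj] {θ : ℝ}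
    (hθ : Real.sin ((n + 1) * θ) = 0) :
    ((pathGraph n).adjMatrix ℝ *ᵥ fun j ↦ Real.sin ((j + 1) * θ)) =
      (2 * Real.cos θ) • fun j : Fin n ↦ Real.sin ((j + 1) * θ) := by
  ext i
  have hsum := adjMatrix_pathGraph_mulVec (f := fun k : ℕ ↦ Real.sin (k * θ)) (by simp)
    (by simpa using hθ) i
  have hprev : (i : ℝ) * θ = (i + 1) * θ - θ := by ring
  have hnext : ((i : ℝ) + 2) * θ = (i + 1) * θ + θ := by ring
  push_cast at hsum
  rw [hsum, hprev, hnext, Real.sin_sub, Real.sin_add, Pi.smul_apply, smul_eq_mul]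
  ring

lemma graphEnergy_pathGraph (n : ℕ) :
    graphEnergy (pathGraph n) = ∑ k : Fin n, |2 * Real.cos ((k + 1) * (Real.pi / (n + 1)))| := by
  classical
  let θ : Fin n → ℝ := fun k ↦ (k + 1) * (Real.pi / (n + 1))
  have hθ_mem : ∀ k, θ k ∈ Set.Ioo 0 Real.pi := by
    intro k
    have hk : (k : ℝ) < n := mod_cast k.is_lt
    refine ⟨by positivity, ?_⟩
    simp only [θ]
    rw [← mul_div_assoc, div_lt_iff₀ (by positivity), mul_comm]
    gcongr
  have hθ_inj : Function.Injective θ := fun k l hkl ↦ by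
    simpa [θ, Real.pi_ne_zero, Nat.cast_add_one_ne_zero, Fin.ext_iff] using hkl
  have hμ_inj : Function.Injective fun k ↦ 2 * Real.cos (θ k) := fun k l hkl ↦
    hθ_inj <| Real.injOn_cos (Set.Ioo_subset_Icc_self (hθ_mem k))
      (Set.Ioo_subset_Icc_self (hθ_mem l)) (mul_left_cancel₀ two_ne_zero hkl)
  let x : Fin n → Fin n → ℝ := fun k j ↦ Real.sin ((j + 1) * θ k)
  have heigen : ∀ k, (pathGraph n).adjMatrix ℝ *ᵥ x k = (2 * Real.cos (θ k)) • x k := by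
    refine fun k ↦ adjMatrix_pathGraph_mulVec_sin ?_
    have hmul : ((n : ℝ) + 1) * θ k = ((k + 1 : ℕ) : ℝ) * Real.pi := by
      simp only [θ]
      push_cast
      field_simp
    rw [hmul, Real.sin_nat_mul_pi]
  have hx_ne_zero : ∀ k, x k ≠ 0 := fun k hk ↦ by
    have hsin := congrFun hk ⟨0, k.pos⟩
    simp only [x, Nat.cast_zero, zero_add, one_mul, Pi.zero_apply] at hsin
    exact (Real.sin_pos_of_mem_Ioo (hθ_mem k)).ne' hsin
  have hx : LinearIndependent ℝ x :=
    Module.End.eigenvectors_linearIndependent' (toLin' ((pathGraph n).adjMatrix ℝ)) _ hμ_inj x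
      fun k ↦ Module.End.hasEigenvector_iff.mpr
        ⟨Module.End.mem_eigenspace_iff.mpr (heigen k), hx_ne_zero k⟩
  exact graphEnergy_eq_sum_norm_of_linearIndependent_eigenvectors _ hx heigen

end Path

section Cycle

variable {n : ℕ}

lemma adjMatrix_cycleGraph_mulVec {R : Type*} [NonAssocSemiring R] (x : Fin (n + 3) → R)
    (i : Fin (n + 3)) :
    ((cycleGraph (n + 3)).adjMatrix R *ᵥ x) i = x (i - 1) + x (i + 1) := by
  have hne : i - 1 ≠ i + 1 := by
    simp only [ne_eq, sub_eq_iff_eq_add, add_assoc i, left_eq_add]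
    exact ne_of_beq_false rfl
  rw [adjMatrix_mulVec_apply, cycleGraph_neighborFinset, sum_pair hne]

lemma pow_fin_val_add_one {M : Type*} [Monoid M] {z : M} (hz : z ^ (n + 1) = 1) (i : Fin (n + 1)) :
    z ^ (i + 1 : Fin (n + 1)).val = z ^ i.val * z := by
  rw [Fin.val_add, ← pow_eq_pow_mod _ hz, pow_add, Fin.val_one', ← pow_eq_pow_mod _ hz, pow_one]

lemma adjMatrix_cycleGraph_mulVec_pow {K : Type*} [Field K] {z : K}
    (hz : z ^ (n + 3) = 1) :
    ((cycleGraph (n + 3)).adjMatrix K *ᵥ fun i ↦ z ^ i.val) =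
      (z + z⁻¹) • fun i : Fin (n + 3) ↦ z ^ i.val := by
  ext i
  have hz_ne_zero : z ≠ 0 := fun h ↦ by simp [h] at hz
  have hprev : z ^ i.val = z ^ (i - 1).val * z := by
    rw [← pow_fin_val_add_one hz, sub_add_cancel]
  rw [adjMatrix_cycleGraph_mulVec, pow_fin_val_add_one hz, Pi.smul_apply, smul_eq_mul, hprev]
  field_simp
  ring

lemma graphEnergy_cycleGraph_of_isPrimitiveRoot {ζ : ℂ}
    (hζ : IsPrimitiveRoot ζ (n + 3)) :
    graphEnergy (cycleGraph (n + 3)) = ∑ k : Fin (n + 3), ‖ζ ^ k.val + (ζ ^ k.val)⁻¹‖ := by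
  have hinj : Function.Injective fun k : Fin (n + 3) ↦ ζ ^ k.val := fun k l hkl ↦
    Fin.ext (hζ.pow_inj k.is_lt l.is_lt hkl)
  have hx : LinearIndependent ℂ fun k i : Fin (n + 3) ↦ (ζ ^ k.val) ^ i.val :=
    linearIndependent_rows_of_det_ne_zero (det_vandermonde_ne_zero_iff.mpr hinj)
  refine graphEnergy_eq_sum_norm_of_linearIndependent_eigenvectors _ hx fun k ↦
    adjMatrix_cycleGraph_mulVec_pow ?_
  rw [pow_right_comm, hζ.pow_eq_one, one_pow]

lemma isPrimitiveRoot_neg_exp_pi_div_of_odd (hodd : Odd n) :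
    IsPrimitiveRoot (-Complex.exp (Real.pi / n * Complex.I)) n := by
  obtain ⟨m, rfl⟩ := hodd
  have hcoprime : (m + 1).Coprime (2 * m + 1) := by
    rw [show 2 * m + 1 = m + (m + 1) by ring, Nat.coprime_add_self_right]
    exact Nat.coprime_self_add_left.mpr (Nat.coprime_one_left m)
  convert Complex.isPrimitiveRoot_exp_of_coprime _ _ (by omega) hcoprime using 1
  have hne : (2 * m + 1 : ℂ) ≠ 0 := mod_cast (2 * m).succ_ne_zero
  rw [← Complex.exp_add_pi_mul_I]
  congr 1
  push_cast
  field_simp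
  ring

lemma graphEnergy_cycleGraph_of_odd (hodd : Odd (n + 3)) :
    graphEnergy (cycleGraph (n + 3)) =
      ∑ k : Fin (n + 3), |2 * Real.cos (k * (Real.pi / (n + 3 : ℕ)))| := by
  rw [graphEnergy_cycleGraph_of_isPrimitiveRoot (isPrimitiveRoot_neg_exp_pi_div_of_odd hodd)]
  refine sum_congr rfl fun k _ ↦ ?_
  set θ : ℝ := Real.pi / (n + 3 : ℕ)
  have hcos : Complex.exp (θ * Complex.I) ^ k.val + (Complex.exp (θ * Complex.I) ^ k.val)⁻¹ =
      (2 * Real.cos (k * θ) : ℝ) := by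
    rw [← Complex.exp_nat_mul, ← Complex.exp_neg]
    push_cast
    rw [Complex.two_cos]
    ring_nf
  have hθ : (Real.pi / (n + 3 : ℕ) : ℂ) = θ := by simp [θ]
  rw [hθ, neg_pow, mul_inv, ← inv_pow (-1 : ℂ), inv_neg_one, ← mul_add, hcos, norm_mul, norm_pow,
    norm_neg, norm_one, one_pow, one_mul, Complex.norm_real, Real.norm_eq_abs]

lemma cycleGraph_adj_add_right_iff (i j v : Fin (n + 1)) :
    (cycleGraph (n + 1)).Adj (i + v) (j + v) ↔ (cycleGraph (n + 1)).Adj i j := by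
  rw [cycleGraph_eq_circulantGraph, circulantGraph_adj_translate]

lemma cycleGraph_adj_succ_succ_iff {i j : Fin n} :
    (cycleGraph (n + 1)).Adj i.succ j.succ ↔ (pathGraph n).Adj i j := by
  wlog hij : i ≤ j generalizing i j
  · rw [adj_comm, adj_comm (pathGraph n), this (le_of_not_ge hij)]
  rcases hij.eq_or_lt with rfl | hlt
  · simp
  · rw [cycleGraph_adj', pathGraph_adj, Fin.coe_sub_iff_lt.mpr (Fin.succ_lt_succ_iff.mpr hlt),
      Fin.coe_sub_iff_le.mpr (Fin.succ_le_succ_iff.mpr hij), Fin.val_succ, Fin.val_succ]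
    omega

/-- Starting from `v`, the remaining vertices of the cycle in their cyclic order
`v + 1, v + 2, …` form a path. -/
def pathGraphIsoInduceCycleGraph (n : ℕ) (v : Fin (n + 1)) :
    pathGraph n ≃g (cycleGraph (n + 1)).induce {u | u ≠ v} where
  toEquiv := (finSuccAboveEquiv 0).trans
    ((Equiv.addRight v).subtypeEquiv fun u ↦ by simp)
  map_rel_iff' :=
    (cycleGraph_adj_add_right_iff _ _ v).trans cycleGraph_adj_succ_succ_iff

lemma localEnergyAt_cycleGraph_of_odd (hn : 3 ≤ n) (hodd : Odd n) (v : Fin n) :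
    localEnergyAt (cycleGraph n) v = 2 := by
  obtain ⟨n, rfl⟩ := Nat.exists_eq_add_of_le' hn
  rw [localEnergyAt, graphEnergy_cycleGraph_of_odd hodd,
    ← graphEnergy_congr (pathGraphIsoInduceCycleGraph (n + 2) v), graphEnergy_pathGraph,
    Fin.sum_univ_succ]
  have hcast : ((n + 3 : ℕ) : ℝ) = (n + 2 : ℕ) + 1 := by
    push_cast
    ring
  simp [hcast]

end Cycle

/-- `K_n` and `C_n` are locally equienergetic for every odd `n ≥ 3`. -/
theorem localEnergy_complete_eq_cycle (n : ℕ) (hn : 3 ≤ n) (hodd : Odd n) :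
    localEnergy (⊤ : SimpleGraph (Fin n)) = localEnergy (cycleGraph n) := by
  have : Nontrivial (Fin n) := Fin.nontrivial_iff_two_le.mpr (by omega)
  simp only [localEnergy, localEnergyAt_top, localEnergyAt_cycleGraph_of_odd hn hodd]
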